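/- arXiv:2407.02780 — 2 statements merged into one kernel-verified Lean document; each statement's English description precedes it below -/
import Mathlib

section
/- Let U be an (m−1)-dimensional totally singular subspace of V, v ∈ V, and t ∈ U^⊥ \ U. Then: (i) v + U and t + v + U are cliques of VO(Q), each of size q^{m−1}; (ii) no vertex of v + U is adjacent to any vertex of t + v + U; and (iii) the function f : V → ℝ equal to 1 on v + U, to −1 on t + v + U, and to 0 elsewhere satisfies (q^{m−1} − 1)·f(γ) = Σ_{δ adjacent to γ} f(δ) for every vertex γ ∈ V. -/
/-!
Since `U` is totally singular of dimension `m - 1` and there is no totally singular subspace of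
dimension `m`, every `x ∈ U^⊥ \ U` has `Q x ≠ 0` (`Q_ne_zero_of_perp`): otherwise `U + ⟨x⟩` would
be such a subspace. Applied to elements of `t + U` this gives the non-adjacency of the two cliques.

For the eigenfunction equation, let `N w` be the number of `u ∈ U` with `Q (w - u) = 0`. As
`Q 0 = 0`, adding `f γ` to the sum over the neighbours of `γ` gives `N w - N (w - t)`, where
`w = γ - v`; so the claim is `N w - N (w - t) = q^(m-1) ([w ∈ U] - [w - t ∈ U])`
(`singCount_sub`). For `u ∈ U`, `Q (w - u) = Q w - B (w, u)`. If `w ∈ U^⊥`, the condition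
`Q (w - u) = 0` reduces to `Q w = 0`, that is to `w ∈ U`, and likewise for `w - t`. If
`w ∉ U^⊥`, then `N w` and `N (w - t)` count the solutions in `U` of two equations
`B (w, u) = const` with the same nonzero linear functional, so they are equal.
-/

open Module

/-- The affine polar graph `VO(Q)`: vertex set `V`, distinct `u, w` adjacent iff
`Q (u - w) = 0` (since `Q (w - u) = Q (u - w)`, symmetrizing is harmless). -/
def affinePolarGraph {F V : Type*} [Field F] [AddCommGroup V] [Module F V]
    (Q : QuadraticForm F V) : SimpleGraph V :=
  SimpleGraph.fromRel (fun u w => Q (u - w) = 0)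

section

variable {F V : Type*} [Field F] [AddCommGroup V] [Module F V]

lemma affinePolarGraph_adj (Q : QuadraticForm F V) (x y : V) :
    (affinePolarGraph Q).Adj x y ↔ x ≠ y ∧ Q (x - y) = 0 := by
  have h : Q (y - x) = Q (x - y) := by rw [← neg_sub, QuadraticMap.map_neg]
  simp [affinePolarGraph, SimpleGraph.fromRel_adj, h]

lemma map_sub_of_singular (Q : QuadraticForm F V) {w u : V} (hu : Q u = 0) :
    Q (w - u) = Q w - QuadraticMap.polar Q w u := by
  have h : QuadraticMap.polar Q w (-u) = - QuadraticMap.polar Q w u :=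
    QuadraticMap.polar_neg_right Q w u
  have h2 : QuadraticMap.polar Q w (-u) = Q (w + -u) - Q w - Q (-u) := rfl
  rw [QuadraticMap.map_neg, hu, h] at h2
  rw [sub_eq_add_neg w u]
  linear_combination -h2

/-- A singular vector of `U^⊥ \ U` would extend `U` to a totally singular subspace of
dimension `m`. -/
lemma Q_ne_zero_of_perp [FiniteDimensional F V] {m : ℕ} (hm : 1 ≤ m) (Q : QuadraticForm F V)
    (hell : ∀ W : Submodule F V, (∀ x ∈ W, Q x = 0) → finrank F W ≠ m)
    (U : Submodule F V) (hU : ∀ x ∈ U, Q x = 0) (hUdim : finrank F U = m - 1)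
    {x : V} (hx : ∀ u ∈ U, QuadraticMap.polar Q x u = 0) (hxU : x ∉ U) : Q x ≠ 0 := by
  intro h0
  refine hell (U ⊔ F ∙ x) ?_ ?_
  · intro y hy
    obtain ⟨u, hu, z, hz, rfl⟩ := Submodule.mem_sup.1 hy
    obtain ⟨a, rfl⟩ := Submodule.mem_span_singleton.1 hz
    rw [QuadraticMap.map_add Q, hU u hu, QuadraticMap.map_smul, h0,
      QuadraticMap.polar_smul_right, QuadraticMap.polar_comm, hx u hu]
    simp
  · have hx0 : x ≠ 0 := fun h => hxU (h ▸ U.zero_mem)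
    have hinf : U ⊓ F ∙ x = ⊥ :=
      disjoint_iff.1 ((Submodule.disjoint_span_singleton' hx0).2 hxU)
    have h := Submodule.finrank_sup_add_finrank_inf_eq U (F ∙ x)
    rw [hinf, finrank_bot, finrank_span_singleton hx0, hUdim] at h
    omega

open Classical in
/-- The number of vectors `u ∈ U` such that `w - u` is singular. -/
noncomputable def singCount [Fintype V] (Q : QuadraticForm F V) (U : Submodule F V) (w : V) : ℕ :=
  (Finset.univ.filter (fun u : V => u ∈ U ∧ Q (w - u) = 0)).card

open Classical in
lemma singCount_of_perp [Fintype V] {m : ℕ} (hm : 1 ≤ m) (Q : QuadraticForm F V)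
    (hell : ∀ W : Submodule F V, (∀ x ∈ W, Q x = 0) → finrank F W ≠ m)
    (U : Submodule F V) (hU : ∀ x ∈ U, Q x = 0) (hUdim : finrank F U = m - 1)
    {w : V} (hw : ∀ u ∈ U, QuadraticMap.polar Q w u = 0) :
    singCount Q U w = if w ∈ U then Nat.card U else 0 := by
  have : FiniteDimensional F V := Module.Finite.of_finite
  unfold singCount
  split_ifs with h
  · rw [Nat.card_eq_fintype_card, Fintype.card_subtype]
    congr 1
    ext u
    simp only [Finset.mem_filter, Finset.mem_univ, true_and, and_iff_left_iff_imp]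
    exact fun hu => hU _ (U.sub_mem h hu)
  · rw [Finset.card_eq_zero, Finset.filter_eq_empty_iff]
    rintro u - ⟨hu, h0⟩
    rw [map_sub_of_singular Q (hU u hu), hw u hu, sub_zero] at h0
    exact Q_ne_zero_of_perp hm Q hell U hU hUdim hw h h0

/-- When `w ∉ U^⊥`, a translation of `U` matches the two solution sets, because `w` and `w - t`
induce the same nonzero functional on `U`. -/
lemma singCount_sub_of_not_perp [Fintype V] (Q : QuadraticForm F V)
    (U : Submodule F V) (hU : ∀ x ∈ U, Q x = 0) {w t : V}
    (ht : ∀ u ∈ U, QuadraticMap.polar Q t u = 0)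
    (hw : ¬ ∀ u ∈ U, QuadraticMap.polar Q w u = 0) :
    singCount Q U w = singCount Q U (w - t) := by
  classical
  push Not at hw
  obtain ⟨a, ha, hwa⟩ := hw
  -- `b` is the multiple of `a` with `B (w, b) = Q (w - t) - Q w`
  obtain ⟨b, hb, hwb⟩ : ∃ b ∈ U, QuadraticMap.polar Q w b = Q (w - t) - Q w := by
    refine ⟨((Q (w - t) - Q w) / QuadraticMap.polar Q w a) • a, U.smul_mem _ ha, ?_⟩
    rw [QuadraticMap.polar_smul_right, smul_eq_mul, div_mul_cancel₀ _ hwa]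
  have key : ∀ u ∈ U, Q (w - t - (u + b)) = Q (w - u) := by
    intro u hu
    rw [map_sub_of_singular Q (hU _ (U.add_mem hu hb)), map_sub_of_singular Q (hU u hu),
      QuadraticMap.polar_sub_left, ht _ (U.add_mem hu hb), QuadraticMap.polar_add_right, hwb]
    ring
  unfold singCount
  refine Finset.card_equiv (Equiv.addRight b) fun u => ?_
  simp only [Finset.mem_filter, Finset.mem_univ, true_and, Equiv.coe_addRight]
  rw [U.add_mem_iff_left hb]
  exact and_congr_right fun hu => by rw [key u hu]

open Classical in
lemma singCount_sub [Fintype V] {m : ℕ} (hm : 1 ≤ m) (Q : QuadraticForm F V)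
    (hell : ∀ W : Submodule F V, (∀ x ∈ W, Q x = 0) → finrank F W ≠ m)
    (U : Submodule F V) (hU : ∀ x ∈ U, Q x = 0) (hUdim : finrank F U = m - 1)
    {t : V} (ht : ∀ u ∈ U, QuadraticMap.polar Q t u = 0) (w : V) :
    (singCount Q U w : ℝ) - singCount Q U (w - t) =
      (Nat.card U : ℝ) * ((if w ∈ U then 1 else 0) - (if w - t ∈ U then 1 else 0)) := by
  have hperp : ∀ x ∈ U, ∀ u ∈ U, QuadraticMap.polar Q x u = 0 := fun x hx u hu => by
    simp [QuadraticMap.polar, hU _ (U.add_mem hx hu), hU x hx, hU u hu]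
  by_cases hw : ∀ u ∈ U, QuadraticMap.polar Q w u = 0
  · have hw' : ∀ u ∈ U, QuadraticMap.polar Q (w - t) u = 0 := fun u hu => by
      rw [QuadraticMap.polar_sub_left, hw u hu, ht u hu, sub_zero]
    rw [singCount_of_perp hm Q hell U hU hUdim hw, singCount_of_perp hm Q hell U hU hUdim hw']
    split_ifs <;> simp
  · have h1 : w ∉ U := fun h => hw (hperp w h)
    have h2 : w - t ∉ U := fun h => hw fun u hu => by
      have := hperp _ h u hu
      rwa [QuadraticMap.polar_sub_left, ht u hu, sub_zero] at this
    rw [singCount_sub_of_not_perp Q U hU ht hw]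
    simp [h1, h2]

open Classical in
/-- `singCount Q U (γ - v)` counts the `δ ∈ v + U` with `Q (γ - δ) = 0`. -/
lemma sum_indicator_eq_singCount [Fintype V] (Q : QuadraticForm F V) (U : Submodule F V)
    (γ v : V) :
    ∑ δ ∈ Finset.univ.filter (fun δ => Q (γ - δ) = 0), (if δ - v ∈ U then (1 : ℝ) else 0) =
      singCount Q U (γ - v) := by
  rw [Finset.sum_boole, Finset.filter_filter, singCount, Nat.cast_inj]
  refine Finset.card_equiv (Equiv.subRight v) fun u => ?_
  simp only [Finset.mem_filter, Finset.mem_univ, true_and, Equiv.subRight_apply]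
  rw [sub_sub_sub_cancel_right, and_comm]

lemma mem_translate (U : Submodule F V) (v x : V) :
    x ∈ (v + ·) '' (U : Set V) ↔ x - v ∈ U := by
  constructor
  · rintro ⟨u, hu, rfl⟩
    simpa using hu
  · exact fun h => ⟨x - v, h, by simp⟩

lemma isClique_translate (Q : QuadraticForm F V) (U : Submodule F V) (hU : ∀ x ∈ U, Q x = 0)
    (v : V) : (affinePolarGraph Q).IsClique ((v + ·) '' (U : Set V)) := by
  intro x hx y hy hxy
  rw [mem_translate] at hx hy
  rw [affinePolarGraph_adj]
  exact ⟨hxy, by simpa using hU _ (U.sub_mem hx hy)⟩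

lemma ncard_translate (U : Submodule F V) (v : V) :
    ((v + ·) '' (U : Set V)).ncard = Nat.card U :=
  Set.ncard_image_of_injective _ (add_right_injective v)

end

/-- elliptic case: for an `(m-1)`-dimensional totally singular `U` and
`t ∈ U^⊥ \ U`, the sets `v + U` and `t + v + U` are isolated cliques of size `q^(m-1)`, and
the associated `±1` function satisfies the eigenfunction equation for `q^(m-1) - 1`. -/
theorem stmt14 {F V : Type*} [Field F] [Fintype F] [AddCommGroup V] [Module F V] [Finite V]
    (q m : ℕ) (hq : Fintype.card F = q) (hm : 1 ≤ m) (hV : finrank F V = 2 * m)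
    (Q : QuadraticForm F V)
    (hnd : ∀ x : V, (∀ y : V, QuadraticMap.polar Q x y = 0) → x = 0)
    (hm2 : 2 ≤ m)
    (hell₁ : ∃ W : Submodule F V, (∀ x ∈ W, Q x = 0) ∧ finrank F W = m - 1)
    (hell₂ : ∀ W : Submodule F V, (∀ x ∈ W, Q x = 0) → finrank F W ≠ m)
    (U : Submodule F V) (hUts : ∀ x ∈ U, Q x = 0) (hUdim : finrank F U = m - 1)
    (v t : V) (ht : ∀ u ∈ U, QuadraticMap.polar Q t u = 0) (htU : t ∉ U)
    (S₀ S₁ : Set V)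
    (hS₀ : S₀ = (v + ·) '' (U : Set V)) (hS₁ : S₁ = (t + v + ·) '' (U : Set V)) :
    (affinePolarGraph Q).IsClique S₀ ∧ (affinePolarGraph Q).IsClique S₁ ∧
    S₀.ncard = q ^ (m - 1) ∧ S₁.ncard = q ^ (m - 1) ∧
    (∀ x ∈ S₀, ∀ y ∈ S₁, ¬(affinePolarGraph Q).Adj x y) ∧
    (∀ f : V → ℝ, (∀ z ∈ S₀, f z = 1) → (∀ z ∈ S₁, f z = -1) →
      (∀ z ∉ S₀ ∪ S₁, f z = 0) →
      ∀ γ : V, ((q : ℝ) ^ (m - 1) - 1) * f γ =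
        ∑ᶠ δ ∈ (affinePolarGraph Q).neighborSet γ, f δ) := by
  classical
  have := Fintype.ofFinite V
  have : FiniteDimensional F V := Module.Finite.of_finite
  have hcard : Nat.card U = q ^ (m - 1) := by
    rw [Module.natCard_eq_pow_finrank (K := F), hUdim, Nat.card_eq_fintype_card, hq]
  have mem₀ : ∀ x, x ∈ S₀ ↔ x - v ∈ U := fun x => by rw [hS₀, mem_translate]
  have mem₁ : ∀ x, x ∈ S₁ ↔ x - (t + v) ∈ U := fun x => by rw [hS₁, mem_translate]
  refine ⟨hS₀ ▸ isClique_translate Q U hUts v, hS₁ ▸ isClique_translate Q U hUts _,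
    by rw [hS₀, ncard_translate, hcard], by rw [hS₁, ncard_translate, hcard], ?_, ?_⟩
  · intro x hx y hy hadj
    rw [mem₀] at hx
    rw [mem₁] at hy
    obtain ⟨-, h0⟩ := (affinePolarGraph_adj Q x y).1 hadj
    -- `x - y = u - t` with `u ∈ U`
    have hu : x - v - (y - (t + v)) ∈ U := U.sub_mem hx hy
    have hQ : Q (t - (x - v - (y - (t + v)))) = 0 := by
      rw [show t - (x - v - (y - (t + v))) = -(x - y) by abel, QuadraticMap.map_neg, h0]
    rw [map_sub_of_singular Q (hUts _ hu), ht _ hu, sub_zero] at hQ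
    exact Q_ne_zero_of_perp hm Q hell₂ U hUts hUdim ht htU hQ
  · intro f hf₀ hf₁ hf γ
    have hfeq : ∀ δ, f δ = (if δ - v ∈ U then (1 : ℝ) else 0) -
        (if δ - (t + v) ∈ U then (1 : ℝ) else 0) := by
      intro δ
      by_cases h0 : δ - v ∈ U
      · have h1 : δ - (t + v) ∉ U := fun h1 => htU (by simpa using U.sub_mem h0 h1)
        simp [h0, h1, hf₀ δ ((mem₀ δ).2 h0)]
      · by_cases h1 : δ - (t + v) ∈ U
        · simp [h0, h1, hf₁ δ ((mem₁ δ).2 h1)]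
        · have hδ : δ ∉ S₀ ∪ S₁ := by simp [mem₀, mem₁, h0, h1]
          simp [h0, h1, hf δ hδ]
    have hN : (affinePolarGraph Q).neighborSet γ =
        ↑((Finset.univ.filter (fun δ => Q (γ - δ) = 0)).erase γ) := by
      ext δ
      simp [affinePolarGraph_adj, ne_comm, and_comm]
    have hγ : γ ∈ Finset.univ.filter (fun δ => Q (γ - δ) = 0) := by simp
    have hsum := Finset.sum_erase_add _ f hγ
    have htot : ∑ δ ∈ Finset.univ.filter (fun δ => Q (γ - δ) = 0), f δ =
        (q : ℝ) ^ (m - 1) * f γ := by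
      have hkey := singCount_sub hm Q hell₂ U hUts hUdim ht (γ - v)
      rw [hcard, sub_sub, add_comm v t] at hkey
      simp only [hfeq]
      rw [Finset.sum_sub_distrib, sum_indicator_eq_singCount, sum_indicator_eq_singCount, hkey]
      push_cast
      rfl
    rw [hN, finsum_mem_coe_finset]
    linarith
end

section
/- The number of unordered pairs {T0, T1} of disjoint cliques of VO(Q), each of size q^{m−1}, such that no vertex of T0 is adjacent to any vertex of T1, equals q^{m−1} · (q²(q² − 1)/2) · ∏_{i=0}^{m−2} (q^{m−i} + 1). -/
/-!
A clique of `VO(Q)` translated so as to contain `0` consists of pairwise orthogonal singular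
vectors, so it spans a totally singular subspace. Hence the cliques of size `q^(m-1)` are exactly
the cosets of the generators, i.e. of the `(m-1)`-dimensional totally singular subspaces
(`clique_eq_coset`, `isClique_coset`).

If `a + W₀` and `b + W₁` are disjoint and not joined by an edge, then for each `w₀ ∈ W₀` the affine
function `w₁ ↦ Q (b - a + w₀ + w₁)` on `W₁` omits the value `0`, so its linear part vanishes and
`b - a + w₀` is orthogonal to `W₁`. Thus `W₀ ≤ W₁ᗮ`, and since all singular vectors of `W₁ᗮ` lie in
`W₁`, `W₀ = W₁ =: W` and `b - a ∈ Wᗮ \ W` (`coset_pair`); the converse is `not_adj_coset`. Counting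
the triples `(W, a, b)` with `b - a ∈ Wᗮ \ W`, of which `2 (q^(m-1))²` represent each unordered pair,
gives the number of pairs in terms of the number of generators (`card_triples`, `card_triples_eq`).

The number of generators is the product `∏ (q^(m-i) + 1)` (`card_gens`). For `X` totally singular of
dimension `k`, exactly one in `q` of the vectors outside `Xᗮ` is singular
(`card_singular_off_perp`). Comparing with a generator yields
`q^(2m-k-1) - q^m + q^(m-1)` singular vectors in `Xᗮ`, and therefore
`(q^(m-1) - q^k) (q^(m-k) + 1)` of them outside `X`. Double counting pairs `(W, v)` with `W` a
generator above `X` and `v ∈ W \ X` shows that the number of generators above `X` is `q^(m-k) + 1`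
times the number above any totally singular `X + ⟨v⟩` of dimension `k + 1`.

In the lemmas below the half-dimension is written `m + 1`, so that generators have dimension `m`.
-/

open Module

section

set_option linter.unusedSectionVars false
open Finset
open scoped Classical
variable {F V : Type*} [Field F] [Fintype F] [AddCommGroup V] [Module F V] [Fintype V]

/-- `X` is totally singular: the quadratic form vanishes identically on it. -/
def TotSing (Q : QuadraticForm F V) (X : Submodule F V) : Prop := ∀ x ∈ X, Q x = 0

/-- The orthogonal complement of `X` with respect to the polar form of `Q`. -/
noncomputable def perp (Q : QuadraticForm F V) (X : Submodule F V) : Submodule F V :=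
  LinearMap.BilinForm.orthogonal Q.polarBilin X

variable {Q : QuadraticForm F V}

lemma mem_perp {X : Submodule F V} {v : V} :
    v ∈ perp Q X ↔ ∀ x ∈ X, QuadraticMap.polar Q x v = 0 := Iff.rfl

lemma Q_add (x y : V) : Q (x + y) = Q x + Q y + QuadraticMap.polar Q x y := by
  simp [QuadraticMap.polar]

lemma finrank_perp (hnd : ∀ x : V, (∀ y : V, QuadraticMap.polar Q x y = 0) → x = 0)
    (X : Submodule F V) : finrank F (perp Q X) = finrank F V - finrank F X := by
  apply LinearMap.BilinForm.finrank_orthogonal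
  have hr : Q.polarBilin.IsRefl := fun x y h => by
    simpa [QuadraticMap.polar_comm] using h
  exact hr.nondegenerate_iff_separatingLeft.2 hnd

lemma card_mem (X : Submodule F V) : #{v | v ∈ X} = Fintype.card F ^ finrank F X := by
  rw [← Module.card_eq_pow_finrank (K := F) (V := X), Fintype.card_subtype]

/-! ### Singular vectors orthogonal to a totally singular subspace -/

lemma card_fiber (X : Submodule F V) (f : X →ₗ[F] F) (hf : f ≠ 0) (c : F) :
    #{x | f x = c} * Fintype.card F = Fintype.card X := by
  have h := card_eq_sum_card_fiberwise (f := f) (s := univ) (t := univ) (by simp)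
  rw [card_univ] at h
  rw [h, sum_congr rfl (g := fun _ => #{x | f x = c}), sum_const, card_univ, smul_eq_mul, mul_comm]
  intro c' _
  obtain ⟨x₀, hx₀⟩ := LinearMap.surjective hf (c - c')
  refine card_equiv (Equiv.addRight x₀) fun i => ?_
  simp [hx₀]
  constructor <;> intro h <;> linear_combination h

lemma TotSing.polar {X : Submodule F V} (hX : TotSing Q X) {x y : V} (hx : x ∈ X) (hy : y ∈ X) :
    QuadraticMap.polar Q x y = 0 := by
  simp [QuadraticMap.polar, hX _ (X.add_mem hx hy), hX _ hx, hX _ hy]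

lemma TotSing.le_perp {X : Submodule F V} (hX : TotSing Q X) : X ≤ perp Q X :=
  fun _ hx _ hy => hX.polar hy hx

/-- Outside `Xᗮ`, exactly one vector in `q` is singular: for `v ∉ Xᗮ` the function
`x ↦ Q (v + x) = Q v + polar Q v x` on `X` is affine and nonconstant, so each coset of `X` that
misses `Xᗮ` has `|X| / q` singular vectors. -/
lemma card_singular_off_perp {X : Submodule F V} (hX : TotSing Q X) :
    #{v | v ∉ perp Q X ∧ Q v = 0} * Fintype.card F = #{v | v ∉ perp Q X} := by
  have h1 : ∀ v ∉ perp Q X, #{x : X | Q (v + x) = 0} * Fintype.card F = Fintype.card X := by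
    intro v hv
    let f : X →ₗ[F] F := (Q.polarBilin v).comp X.subtype
    have hf : f ≠ 0 := by
      intro h0
      apply hv
      intro x hx
      have := LinearMap.congr_fun h0 ⟨x, hx⟩
      simpa [f, QuadraticMap.polar_comm] using this
    rw [← card_fiber X f hf (- Q v)]
    congr 2
    ext x
    simp only [mem_filter, mem_univ, true_and, Q_add, hX x x.2, f]
    simp
    constructor <;> intro h <;> linear_combination h
  have h2 := sum_card_bipartiteAbove_eq_sum_card_bipartiteBelow
    (s := ({v | v ∉ perp Q X} : Finset V)) (t := (univ : Finset X)) (fun v (x : X) => Q (v + (x : V)) = 0)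
  have h3 : ∀ x : X, #(({v | v ∉ perp Q X} : Finset V).bipartiteBelow
      (fun v (x : X) => Q (v + (x : V)) = 0) x) = #{v | v ∉ perp Q X ∧ Q v = 0} := by
    intro x
    refine card_equiv (Equiv.addRight (x : V)) fun v => ?_
    have := hX.le_perp x.2
    simp [bipartiteBelow, Submodule.add_mem_iff_left _ this]
  have h4 := congrArg (· * Fintype.card F) h2
  simp only [sum_congr rfl (fun x _ => h3 x), sum_mul] at h4
  rw [sum_congr rfl (g := fun _ => Fintype.card X)] at h4
  · simp only [sum_const, smul_eq_mul, card_univ] at h4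
    apply Nat.eq_of_mul_eq_mul_left (Fintype.card_pos (α := X))
    linarith
  · intro v hv
    exact h1 v (by simpa using hv)

lemma TotSing.sup_span {X : Submodule F V} (hX : TotSing Q X) {v : V} (hv : v ∈ perp Q X)
    (h0 : Q v = 0) : TotSing Q (X ⊔ Submodule.span F {v}) := by
  intro z hz
  obtain ⟨x, hx, y, hy, rfl⟩ := Submodule.mem_sup.1 hz
  obtain ⟨c, rfl⟩ := Submodule.mem_span_singleton.1 hy
  simp [Q_add, hX x hx, h0, QuadraticMap.map_smul, mem_perp.1 hv x hx]

/-- If no totally singular subspace has dimension `m + 1`, then an `m`-dimensional totally singular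
`W` contains all singular vectors of `Wᗮ`. -/
lemma TotSing.mem_of_perp {m : ℕ}
    (hell₂ : ∀ W : Submodule F V, TotSing Q W → finrank F W ≠ m + 1)
    {W : Submodule F V} (hW : TotSing Q W) (hf : finrank F W = m)
    {v : V} (hv : v ∈ perp Q W) (h0 : Q v = 0) : v ∈ W := by
  by_contra hn
  apply hell₂ _ (hW.sup_span hv h0)
  rw [Submodule.finrank_sup_span_singleton hn, hf]

/-- The number `z` of singular vectors in `Xᗮ`, for `X` totally singular, is determined by
`q z + q ^ (m + 2) = q ^ (2 (m + 1) - dim X) + q ^ (m + 1)`. The total number of singular vectors is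
the sum of those inside and outside `Xᗮ`; evaluating it at `W`, where the ones inside are the
elements of `W`, gives the count inside `Xᗮ` for every `X`. -/
lemma card_singular_perp {m : ℕ} (hnd : ∀ x : V, (∀ y : V, QuadraticMap.polar Q x y = 0) → x = 0)
    (hV : finrank F V = 2 * (m + 1))
    (hell₂ : ∀ W : Submodule F V, TotSing Q W → finrank F W ≠ m + 1)
    {W X : Submodule F V} (hW : TotSing Q W) (hf : finrank F W = m) (hX : TotSing Q X) :
    #{v | v ∈ perp Q X ∧ Q v = 0} * Fintype.card F + Fintype.card F ^ (m + 2) =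
      Fintype.card F ^ (2 * (m + 1) - finrank F X) + Fintype.card F ^ (m + 1) := by
  have key : ∀ Y : Submodule F V, TotSing Q Y →
      #{v | v ∉ perp Q Y ∧ Q v = 0} * Fintype.card F + Fintype.card F ^ (2 * (m + 1) - finrank F Y)
        = Fintype.card F ^ (2 * (m + 1)) ∧
      #{v | v ∈ perp Q Y ∧ Q v = 0} + #{v | v ∉ perp Q Y ∧ Q v = 0} = #{v | Q v = 0} := by
    intro Y hY
    rw [card_singular_off_perp hY, ← hV, ← finrank_perp hnd, ← card_mem,
      ← Module.card_eq_pow_finrank (K := F) (V := V)]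
    constructor
    · rw [add_comm, card_filter_add_card_filter_not, card_univ]
    · have := card_filter_add_card_filter_not (s := ({v | Q v = 0} : Finset V)) (· ∈ perp Q Y)
      simpa [filter_filter, and_comm] using this
  obtain ⟨a1, a2⟩ := key X hX
  obtain ⟨b1, b2⟩ := key W hW
  have b3 : #{v | v ∈ perp Q W ∧ Q v = 0} = Fintype.card F ^ m := by
    rw [← hf, ← card_mem]
    congr 1
    ext v
    simp only [mem_filter, mem_univ, true_and]
    exact ⟨fun h => hW.mem_of_perp hell₂ hf h.1 h.2, fun h => ⟨hW.le_perp h, hW v h⟩⟩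
  rw [hf, show 2 * (m + 1) - m = m + 2 by lia] at b1
  rw [b3] at b2
  have := congrArg (· * Fintype.card F) (a2.trans b2.symm)
  simp only [add_mul, ← pow_succ] at this
  linarith

/-! ### Generators -/

/-- The `m`-dimensional totally singular subspaces containing `X`. -/
noncomputable def gens (Q : QuadraticForm F V) (m : ℕ) (X : Submodule F V) :
    Finset (Submodule F V) :=
  (Set.toFinite {W | X ≤ W ∧ TotSing Q W ∧ finrank F W = m}).toFinset

lemma mem_gens {m : ℕ} {X W : Submodule F V} :
    W ∈ gens Q m X ↔ X ≤ W ∧ TotSing Q W ∧ finrank F W = m := by simp [gens]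

/-- The number of generators above a totally singular `X` of codimension `j` in a generator. For the
induction step, count the pairs `(W, v)` with `X ≤ W` a generator and `v ∈ W \ X`: the vectors `v`
that occur are the singular vectors of `Xᗮ` outside `X`, and each lies in as many such `W` as there
are generators above `X + ⟨v⟩`. -/
lemma card_gens {m : ℕ} (hnd : ∀ x : V, (∀ y : V, QuadraticMap.polar Q x y = 0) → x = 0)
    (hV : finrank F V = 2 * (m + 1))
    (hell₂ : ∀ W : Submodule F V, TotSing Q W → finrank F W ≠ m + 1)
    {W : Submodule F V} (hW : TotSing Q W) (hf : finrank F W = m) (j : ℕ) :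
    ∀ X : Submodule F V, TotSing Q X → finrank F X + j = m →
      #(gens Q m X) = ∏ i ∈ range j, (Fintype.card F ^ (i + 2) + 1) := by
  induction j with
  | zero =>
    intro X hX hk
    rw [range_zero, prod_empty, card_eq_one]
    refine ⟨X, ?_⟩
    ext W
    rw [mem_gens, mem_singleton]
    constructor
    · rintro ⟨h1, _, h3⟩
      exact (Submodule.eq_of_le_of_finrank_eq h1 (by lia)).symm
    · rintro rfl
      exact ⟨le_rfl, hX, by lia⟩
  | succ j ih =>
    intro X hX hk
    set q := Fintype.card F with hq
    set k := finrank F X with hkdef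
    have hq2 : 1 < q := Fintype.one_lt_card
    have h2 := sum_card_bipartiteAbove_eq_sum_card_bipartiteBelow
      (s := gens Q m X) (t := ({v | v ∉ X} : Finset V)) (fun W v => v ∈ W)
    have hl : ∀ W ∈ gens Q m X,
        #(({v | v ∉ X} : Finset V).bipartiteAbove (fun W v => v ∈ W) W) = q ^ m - q ^ k := by
      intro W hW
      obtain ⟨h1, h2, h3⟩ := mem_gens.1 hW
      rw [← h3, hkdef, hq, ← card_mem, ← card_mem, ← card_sdiff_of_subset]
      · congr 1
        ext v
        simp [bipartiteAbove, and_comm]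
      · intro v hv
        simpa using h1 (by simpa using hv)
    have hr : ∀ v ∈ ({v | v ∉ X} : Finset V),
        #((gens Q m X).bipartiteBelow (fun W v => v ∈ W) v) =
          if v ∈ perp Q X ∧ Q v = 0 then ∏ i ∈ range j, (q ^ (i + 2) + 1) else 0 := by
      intro v hv
      have hv : v ∉ X := by simpa using hv
      split_ifs with h
      · rw [← ih (X ⊔ Submodule.span F {v}) (hX.sup_span h.1 h.2)
          (by rw [Submodule.finrank_sup_span_singleton hv]; lia)]
        congr 1
        ext W
        simp [bipartiteBelow, mem_gens]
        tauto
      · rw [card_eq_zero, bipartiteBelow, filter_eq_empty_iff]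
        intro W hW hvW
        obtain ⟨h1, h2, h3⟩ := mem_gens.1 hW
        exact h ⟨fun x hx => h2.polar (h1 hx) hvW, h2 v hvW⟩
    rw [sum_congr rfl hl, sum_congr rfl hr, sum_const, ← sum_filter, sum_const, smul_eq_mul,
      smul_eq_mul] at h2
    have h5 : #{v ∈ ({v | v ∉ X} : Finset V) | v ∈ perp Q X ∧ Q v = 0} + q ^ k =
        #{v | v ∈ perp Q X ∧ Q v = 0} := by
      rw [hq, hkdef, ← card_mem, ← card_filter_add_card_filter_not
        (s := ({v | v ∈ perp Q X ∧ Q v = 0} : Finset V)) (· ∈ X), add_comm]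
      congr 2
      · ext v
        simp only [mem_filter, mem_univ, true_and]
        exact ⟨fun h => ⟨⟨hX.le_perp h, hX v h⟩, h⟩, fun h => h.2⟩
      · ext v
        simp [and_comm]
    have h6 := card_singular_perp hnd hV hell₂ hW hf hX
    rw [← h5, ← hq, ← hkdef] at h6
    have hm : m = k + j + 1 := by lia
    rw [show 2 * (m + 1) - k = k + 2 * j + 4 by lia, hm] at h6
    rw [prod_range_succ]
    generalize #{v ∈ ({v | v ∉ X} : Finset V) | v ∈ perp Q X ∧ Q v = 0} = s at h2 h6
    have hlt : q ^ k < q ^ m := Nat.pow_lt_pow_right hq2 (by lia)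
    have hs : s = (q ^ m - q ^ k) * (q ^ (j + 2) + 1) := by
      apply Nat.eq_of_mul_eq_mul_right (show 0 < q by lia)
      zify [hlt.le]
      zify at h6
      rw [hm]
      linear_combination h6
    rw [hs] at h2
    apply Nat.eq_of_mul_eq_mul_right (Nat.sub_pos_of_lt hlt)
    linarith

lemma TotSing.finrank_le {m : ℕ}
    (hell₂ : ∀ W : Submodule F V, TotSing Q W → finrank F W ≠ m + 1)
    {W : Submodule F V} (hW : TotSing Q W) : finrank F W ≤ m := by
  by_contra! h
  let b := finBasis F W
  have hli : LinearIndependent F (fun i : Fin (m + 1) => (b (Fin.castLE h i) : V)) :=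
    (b.linearIndependent.comp _ (Fin.castLE_injective h)).map' W.subtype (by simp)
  refine hell₂ (Submodule.span F (Set.range fun i : Fin (m + 1) => (b (Fin.castLE h i) : V)))
    (fun x hx => hW x ?_) (by rw [finrank_span_eq_card hli, Fintype.card_fin])
  refine Submodule.span_le.2 ?_ hx
  rintro _ ⟨i, rfl⟩
  exact (b _).2

/-! ### Large cliques are cosets of generators -/

lemma totSing_span {S : Set V} (h1 : ∀ x ∈ S, Q x = 0)
    (h2 : ∀ x ∈ S, ∀ y ∈ S, QuadraticMap.polar Q x y = 0) : TotSing Q (Submodule.span F S) := by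
  have hadd : ∀ x ∈ S, ∀ y ∈ Submodule.span F S, QuadraticMap.polar Q x y = 0 := by
    intro x hx y hy
    have : Submodule.span F S ≤ LinearMap.ker (Q.polarBilin x) :=
      Submodule.span_le.2 fun y hy => h2 x hx y hy
    exact this hy
  have hspan : Submodule.span F S ≤ perp Q (Submodule.span F S) :=
    Submodule.span_le.2 fun x hx y hy => by
      have := hadd x hx y hy
      simpa [QuadraticMap.polar_comm] using this
  intro x hx
  induction hx using Submodule.span_induction with
  | mem x hx => exact h1 x hx
  | zero => simp
  | add x y hx hy ihx ihy => rw [Q_add, ihx, ihy, mem_perp.1 (hspan hy) x hx]; simp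
  | smul c x hx ih => simp [QuadraticMap.map_smul, ih]

/-- The affine subspace `a + W`, as a set of vectors. -/
def coset (W : Submodule F V) (a : V) : Set V := {x | x - a ∈ W}

lemma mem_coset {W : Submodule F V} {a x : V} : x ∈ coset W a ↔ x - a ∈ W := Iff.rfl

lemma coset_self (W : Submodule F V) (a : V) : a ∈ coset W a := by simp [mem_coset]

lemma coset_eq_of_mem {W : Submodule F V} {a b : V} (h : b ∈ coset W a) :
    coset W b = coset W a := by
  ext x
  rw [mem_coset, mem_coset, ← Submodule.add_mem_iff_left W (mem_coset.1 h)]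
  simp

lemma eq_of_coset_eq {W W' : Submodule F V} {a b : V} (h : coset W a = coset W' b) : W = W' := by
  have hab : a ∈ coset W' b := h ▸ coset_self W a
  rw [← coset_eq_of_mem hab] at h
  ext x
  have := Set.ext_iff.1 h (x + a)
  simpa [mem_coset] using this

lemma ncard_coset (W : Submodule F V) (a : V) :
    (coset W a).ncard = Fintype.card F ^ finrank F W := by
  rw [← card_mem W, ← Set.ncard_coe_finset]
  refine Set.ncard_congr (fun x _ => x - a) (fun x hx => by simpa [mem_coset] using hx)
    (fun x y _ _ h => by simpa using h) (fun y hy => ⟨y + a, by simpa [mem_coset] using hy, by simp⟩)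

lemma adj_iff {x y : V} : (affinePolarGraph Q).Adj x y ↔ x ≠ y ∧ Q (x - y) = 0 := by
  rw [affinePolarGraph, SimpleGraph.fromRel_adj, ← neg_sub x y, QuadraticMap.map_neg, or_self]

lemma isClique_coset {W : Submodule F V} (hW : TotSing Q W) (a : V) :
    (affinePolarGraph Q).IsClique (coset W a) := by
  intro x hx y hy hxy
  refine adj_iff.2 ⟨hxy, hW _ ?_⟩
  simpa using W.sub_mem hx hy

/-- After translating a clique to contain `0`, its elements are singular and pairwise orthogonal,
so it spans a totally singular subspace; the bound on dimensions forces it to fill its span. -/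
lemma clique_eq_coset {m : ℕ}
    (hell₂ : ∀ W : Submodule F V, TotSing Q W → finrank F W ≠ m + 1) {T : Set V}
    (hT : (affinePolarGraph Q).IsClique T) (hc : T.ncard = Fintype.card F ^ m) :
    ∃ W a, TotSing Q W ∧ finrank F W = m ∧ T = coset W a := by
  have hq2 : 1 < Fintype.card F := Fintype.one_lt_card
  obtain ⟨a, ha⟩ : T.Nonempty := by
    rw [← Set.ncard_pos, hc]
    positivity
  have hQ : ∀ x ∈ T, ∀ y ∈ T, Q (x - y) = 0 := by
    intro x hx y hy
    by_cases hxy : x = y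
    · simp [hxy]
    · exact (adj_iff.1 (hT hx hy hxy)).2
  let W := Submodule.span F ((fun x => x - a) '' T)
  have hW : TotSing Q W := by
    apply totSing_span
    · rintro _ ⟨x, hx, rfl⟩
      exact hQ x hx a ha
    · rintro _ ⟨x, hx, rfl⟩ _ ⟨y, hy, rfl⟩
      have h := Q_add (Q := Q) (x - a) (-(y - a))
      rw [QuadraticMap.polar_neg_right, QuadraticMap.map_neg, hQ x hx a ha, hQ y hy a ha,
        show x - a + -(y - a) = x - y by abel, hQ x hx y hy] at h
      linear_combination h
  have hsub : T ⊆ coset W a := fun x hx => Submodule.subset_span ⟨x, hx, rfl⟩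
  have hle := Set.ncard_le_ncard hsub
  have hf : finrank F W = m := by
    apply le_antisymm (hW.finrank_le hell₂)
    rw [hc, ncard_coset] at hle
    exact (Nat.pow_le_pow_iff_right hq2).1 hle
  refine ⟨W, a, hW, hf, Set.eq_of_subset_of_ncard_le hsub ?_⟩
  rw [hc, ncard_coset, hf]

/-! ### Non-adjacent pairs of cosets -/

/-- On `e + W` the form `Q` is an affine function with linear part `polar Q e`; it can avoid the
value `0` only if that linear part vanishes on `W`. -/
lemma mem_perp_of_anisotropic {W : Submodule F V} (hW : TotSing Q W) {e : V}
    (h : ∀ w ∈ W, Q (e + w) ≠ 0) : e ∈ perp Q W := by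
  intro w hw
  by_contra hne
  replace hne : QuadraticMap.polar Q w e ≠ 0 := hne
  apply h ((-(Q e / QuadraticMap.polar Q w e)) • w) (W.smul_mem _ hw)
  rw [Q_add, hW _ (W.smul_mem _ hw), QuadraticMap.polar_smul_right, QuadraticMap.polar_comm Q e w,
    smul_eq_mul]
  field_simp
  simp

/-- Two disjoint non-adjacent cosets of generators are parallel, and their difference is a nonzero
class of `Wᗮ / W`. -/
lemma coset_pair {m : ℕ}
    (hell₂ : ∀ W : Submodule F V, TotSing Q W → finrank F W ≠ m + 1)
    {W₀ W₁ : Submodule F V} (hW₀ : TotSing Q W₀) (hf₀ : finrank F W₀ = m)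
    (hW₁ : TotSing Q W₁) (hf₁ : finrank F W₁ = m) {a b : V}
    (hd : Disjoint (coset W₀ a) (coset W₁ b))
    (hn : ∀ x ∈ coset W₀ a, ∀ y ∈ coset W₁ b, ¬(affinePolarGraph Q).Adj x y) :
    W₀ = W₁ ∧ b - a ∈ perp Q W₀ ∧ b - a ∉ W₀ := by
  have h : ∀ w₀ ∈ W₀, ∀ w₁ ∈ W₁, Q ((b - a + w₀) + w₁) ≠ 0 := by
    intro w₀ h₀ w₁ h₁ hQ
    have hx : a - w₀ ∈ coset W₀ a := by simpa [mem_coset] using h₀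
    have hy : b + w₁ ∈ coset W₁ b := by simpa [mem_coset] using h₁
    refine hn _ hx _ hy (adj_iff.2 ⟨fun he => ?_, ?_⟩)
    · exact Set.disjoint_left.1 hd hx (he ▸ hy)
    · rw [← QuadraticMap.map_neg, ← hQ]
      congr 1
      abel
  have hp : ∀ w₀ ∈ W₀, b - a + w₀ ∈ perp Q W₁ := fun w₀ h₀ =>
    mem_perp_of_anisotropic hW₁ (h w₀ h₀)
  have hba : b - a ∈ perp Q W₁ := by simpa using hp 0 W₀.zero_mem
  have hle : W₀ ≤ W₁ := fun w hw =>
    hW₁.mem_of_perp hell₂ hf₁ ((Submodule.add_mem_iff_right _ hba).1 (hp w hw)) (hW₀ w hw)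
  have heq : W₀ = W₁ := Submodule.eq_of_le_of_finrank_eq hle (by rw [hf₀, hf₁])
  subst heq
  refine ⟨rfl, hba, fun hmem => h 0 (W₀.zero_mem) _ (W₀.neg_mem hmem) ?_⟩
  simp

lemma not_adj_coset {m : ℕ}
    (hell₂ : ∀ W : Submodule F V, TotSing Q W → finrank F W ≠ m + 1)
    {W : Submodule F V} (hW : TotSing Q W) (hf : finrank F W = m) {a b : V}
    (hp : b - a ∈ perp Q W) (hn : b - a ∉ W) :
    Disjoint (coset W a) (coset W b) ∧
      ∀ x ∈ coset W a, ∀ y ∈ coset W b, ¬(affinePolarGraph Q).Adj x y := by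
  have key : ∀ x ∈ coset W a, ∀ y ∈ coset W b, Q (x - y) ≠ 0 := by
    intro x hx y hy hQ
    have e : x - y = ((x - a) - (y - b)) - (b - a) := by abel
    have hw : (x - a) - (y - b) ∈ W := W.sub_mem hx hy
    have hxy := hW.mem_of_perp hell₂ hf (v := x - y)
      (e ▸ (perp Q W).sub_mem (hW.le_perp hw) hp) hQ
    rw [e, Submodule.sub_mem_iff_right _ hw] at hxy
    exact hn hxy
  refine ⟨Set.disjoint_left.2 fun x hx hy => key x hx x hy (by simp), fun x hx y hy h => ?_⟩
  exact key x hx y hy (adj_iff.1 h).2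

/-! ### Counting the pairs -/

/-- The triples `(W, a, b)` with `W` an `m`-dimensional totally singular subspace and
`b - a ∈ Wᗮ \ W`; such a triple represents the pair of cosets `a + W`, `b + W`. -/
noncomputable def triples (Q : QuadraticForm F V) (m : ℕ) :
    Finset (Σ _ : Submodule F V, Σ _ : V, V) :=
  (gens Q m ⊥).sigma fun W => univ.sigma fun a => {b | b - a ∈ perp Q W ∧ b - a ∉ W}

lemma mem_triples {m : ℕ} {W : Submodule F V} {a b : V} :
    (⟨W, a, b⟩ : Σ _ : Submodule F V, Σ _ : V, V) ∈ triples Q m ↔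
      (TotSing Q W ∧ finrank F W = m) ∧ b - a ∈ perp Q W ∧ b - a ∉ W := by
  simp [triples, mem_gens]

lemma card_triples {m : ℕ} (hnd : ∀ x : V, (∀ y : V, QuadraticMap.polar Q x y = 0) → x = 0)
    (hV : finrank F V = 2 * (m + 1)) :
    #(triples Q m) = #(gens Q m ⊥) * (Fintype.card F ^ (2 * (m + 1)) *
      (Fintype.card F ^ (m + 2) - Fintype.card F ^ m)) := by
  rw [triples, card_sigma, ← smul_eq_mul, ← sum_const]
  refine sum_congr rfl fun W hW => ?_
  obtain ⟨-, hW, hf⟩ := mem_gens.1 hW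
  rw [card_sigma, ← hV, ← Module.card_eq_pow_finrank (K := F) (V := V), ← smul_eq_mul,
    ← card_univ, ← sum_const]
  refine sum_congr rfl fun a _ => ?_
  have hp : m + 2 = finrank F (perp Q W) := by rw [finrank_perp hnd]; lia
  rw [hp, ← card_mem]
  conv_rhs => rw [← hf, ← card_mem, ← card_sdiff_of_subset (fun v hv => by
    simpa using hW.le_perp (by simpa using hv))]
  refine card_equiv (Equiv.subRight a) fun b => ?_
  simp

/-- The unordered pairs of disjoint, mutually non-adjacent cliques of size `q ^ m` of the affine
polar graph, where `q` is the order of the field. -/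
def isoPairs (Q : QuadraticForm F V) (m : ℕ) : Set (Set (Set V)) :=
  {P : Set (Set V) | ∃ T₀ T₁ : Set V, P = {T₀, T₁} ∧ Disjoint T₀ T₁ ∧
        (affinePolarGraph Q).IsClique T₀ ∧ (affinePolarGraph Q).IsClique T₁ ∧
        T₀.ncard = Fintype.card F ^ m ∧ T₁.ncard = Fintype.card F ^ m ∧
        ∀ x ∈ T₀, ∀ y ∈ T₁, ¬(affinePolarGraph Q).Adj x y}

/-- A pair `{T₀, T₁}` is represented by the triples `(W, a, b)` with `(a, b)` in `T₀ × T₁` or in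
`T₁ × T₀`, where `W` is the common direction of `T₀` and `T₁`. -/
lemma card_triples_eq {m : ℕ}
    (hell₂ : ∀ W : Submodule F V, TotSing Q W → finrank F W ≠ m + 1) :
    #(triples Q m) = (isoPairs Q m).ncard * (2 * (Fintype.card F ^ m * Fintype.card F ^ m)) := by
  rw [Set.ncard_eq_toFinset_card (isoPairs Q m),
    card_eq_sum_card_fiberwise (t := (Set.toFinite (isoPairs Q m)).toFinset)
      (f := fun t => ({coset t.1 t.2.1, coset t.1 t.2.2} : Set (Set V))),
    ← smul_eq_mul, ← sum_const]
  · refine sum_congr rfl fun P hP => ?_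
    rw [Set.Finite.mem_toFinset] at hP
    obtain ⟨T₀, T₁, rfl, hd, hc₀, hc₁, hn₀, hn₁, hadj⟩ := hP
    obtain ⟨W, a₀, hW, hf, rfl⟩ := clique_eq_coset hell₂ hc₀ hn₀
    obtain ⟨W₁, b₀, hW₁, hf₁, rfl⟩ := clique_eq_coset hell₂ hc₁ hn₁
    obtain ⟨rfl, hp, hnot⟩ := coset_pair hell₂ hW hf hW₁ hf₁ hd hadj
    let A := (coset W a₀).toFinset
    let B := (coset W b₀).toFinset
    have hdAB : Disjoint A B := Set.disjoint_toFinset.2 hd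
    have hfib : (triples Q m).filter (fun t => ({coset t.1 t.2.1, coset t.1 t.2.2} : Set (Set V))
          = {coset W a₀, coset W b₀}) =
        ((A ×ˢ B) ∪ (B ×ˢ A)).image
          (fun p => (⟨W, p.1, p.2⟩ : Σ _ : Submodule F V, Σ _ : V, V)) := by
      ext ⟨W', a, b⟩
      simp only [mem_filter, mem_triples, mem_image, mem_union, mem_product, A, B, Set.mem_toFinset,
        Set.pair_eq_pair_iff]
      constructor
      · rintro ⟨-, ⟨h1, h2⟩ | ⟨h1, h2⟩⟩ <;> obtain rfl := eq_of_coset_eq h1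
        · exact ⟨(a, b), Or.inl ⟨h1 ▸ coset_self _ a, h2 ▸ coset_self _ b⟩, rfl⟩
        · exact ⟨(a, b), Or.inr ⟨h1 ▸ coset_self _ a, h2 ▸ coset_self _ b⟩, rfl⟩
      · rintro ⟨⟨a', b'⟩, h, he⟩
        obtain ⟨rfl, rfl, rfl⟩ : W = W' ∧ a' = a ∧ b' = b := by simpa using he
        rcases h with ⟨h1, h2⟩ | ⟨h1, h2⟩
        · have hw : (b' - b₀) - (a' - a₀) ∈ W := W.sub_mem h2 h1
          have e : b' - a' = (b' - b₀) - (a' - a₀) + (b₀ - a₀) := by abel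
          refine ⟨⟨⟨hW, hf⟩, ?_, ?_⟩, Or.inl ⟨coset_eq_of_mem h1, coset_eq_of_mem h2⟩⟩
          · rw [e]
            exact (perp Q W).add_mem (hW.le_perp hw) hp
          · rwa [e, Submodule.add_mem_iff_right _ hw]
        · have hw : (b' - a₀) - (a' - b₀) ∈ W := W.sub_mem h2 h1
          have e : b' - a' = (b' - a₀) - (a' - b₀) - (b₀ - a₀) := by abel
          refine ⟨⟨⟨hW, hf⟩, ?_, ?_⟩, Or.inr ⟨coset_eq_of_mem h1, coset_eq_of_mem h2⟩⟩
          · rw [e]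
            exact (perp Q W).sub_mem (hW.le_perp hw) hp
          · rwa [e, Submodule.sub_mem_iff_right _ hw]
    rw [hfib, card_image_of_injective, card_union_of_disjoint, card_product, card_product,
      ← Set.ncard_eq_toFinset_card', ← Set.ncard_eq_toFinset_card', hn₀, hn₁, two_mul]
    · exact disjoint_product.2 (Or.inl hdAB)
    · rintro ⟨a, b⟩ ⟨c, d⟩ h
      simpa using h
  · rintro ⟨W, a, b⟩ ht
    obtain ⟨⟨hW, hf⟩, hp, hn⟩ := mem_triples.1 (mem_coe.1 ht)
    obtain ⟨h1, h2⟩ := not_adj_coset hell₂ hW hf hp hn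
    rw [Set.Finite.coe_toFinset]
    exact ⟨_, _, rfl, h1, isClique_coset hW a, isClique_coset hW b, by rw [ncard_coset, hf],
      by rw [ncard_coset, hf], h2⟩

end

/-- elliptic case: the number of unordered pairs of disjoint isolated cliques
of size `q^(m-1)` in `VO(Q)` equals
`q^(m-1) · (q²(q² - 1)/2) · ∏_{i=0}^{m-2} (q^(m-i) + 1)`. -/
theorem stmt16 {F V : Type*} [Field F] [Fintype F] [AddCommGroup V] [Module F V] [Finite V]
    (q m : ℕ) (hq : Fintype.card F = q) (hm : 1 ≤ m) (hV : finrank F V = 2 * m)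
    (Q : QuadraticForm F V)
    (hnd : ∀ x : V, (∀ y : V, QuadraticMap.polar Q x y = 0) → x = 0)
    (hm2 : 2 ≤ m)
    (hell₁ : ∃ W : Submodule F V, (∀ x ∈ W, Q x = 0) ∧ finrank F W = m - 1)
    (hell₂ : ∀ W : Submodule F V, (∀ x ∈ W, Q x = 0) → finrank F W ≠ m) :
    (({P : Set (Set V) | ∃ T₀ T₁ : Set V, P = {T₀, T₁} ∧ Disjoint T₀ T₁ ∧
        (affinePolarGraph Q).IsClique T₀ ∧ (affinePolarGraph Q).IsClique T₁ ∧
        T₀.ncard = q ^ (m - 1) ∧ T₁.ncard = q ^ (m - 1) ∧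
        ∀ x ∈ T₀, ∀ y ∈ T₁, ¬(affinePolarGraph Q).Adj x y}.ncard : ℝ)) =
      (q : ℝ) ^ (m - 1) * ((q : ℝ) ^ 2 * ((q : ℝ) ^ 2 - 1) / 2) *
        ∏ i ∈ Finset.range (m - 1), ((q : ℝ) ^ (m - i) + 1) := by
  classical
  have := Fintype.ofFinite V
  obtain ⟨n, rfl⟩ : ∃ n, m = n + 1 := ⟨m - 1, by lia⟩
  subst hq
  simp only [Nat.add_sub_cancel] at hell₁ ⊢
  obtain ⟨W, hW, hf⟩ := hell₁
  have hcount := card_triples_eq (Q := Q) (m := n) hell₂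
  rw [card_triples hnd hV, card_gens hnd hV hell₂ hW hf n ⊥ (by simp [TotSing]) (by simp)] at hcount
  change ((isoPairs Q n).ncard : ℝ) = _
  have hprod : (∏ i ∈ Finset.range n, ((Fintype.card F : ℝ) ^ (n + 1 - i) + 1)) =
      ∏ i ∈ Finset.range n, ((Fintype.card F : ℝ) ^ (i + 2) + 1) := by
    rw [← Finset.prod_range_reflect]
    refine Finset.prod_congr rfl fun i hi => ?_
    rw [Finset.mem_range] at hi
    congr 2
    lia
  rw [hprod]
  have hq2 : 1 < Fintype.card F := Fintype.one_lt_card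
  have hle : Fintype.card F ^ n ≤ Fintype.card F ^ (n + 2) :=
    Nat.pow_le_pow_right (by lia) (by lia)
  have hR := congrArg (Nat.cast : ℕ → ℝ) hcount
  push_cast [hle] at hR
  have hpos : (0 : ℝ) < Fintype.card F := by exact_mod_cast (by lia : 0 < Fintype.card F)
  apply mul_right_cancel₀ (b := 2 * ((Fintype.card F : ℝ) ^ n * (Fintype.card F : ℝ) ^ n))
    (by positivity)
  rw [← hR]
  ring
end
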